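/- arXiv:2505.05009 — 8 statements merged into one kernel-verified Lean document; each statement's English description precedes it below -/
import Mathlib

section
/- Let G be a finite simple graph on vertex set V. Then G contains an independent set I with |I| ≥ ∑_{v ∈ V} 1/(1 + deg(v)). -/
/-- A finset of vertices is an independent set of the simple graph `G` if no two
distinct elements of it are adjacent. -/
def SimpleGraph.IsIndepFinset {V : Type*} (G : SimpleGraph V) (I : Finset V) : Prop :=
  ∀ x ∈ I, ∀ y ∈ I, x ≠ y → ¬ G.Adj x y

/-!
Choose the independent set greedily: pick a vertex `v` maximizing `w v / (1 + deg v)` (for unit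
weights, a vertex of minimum degree), delete its closed neighbourhood, and repeat. The
`1 + deg v` deleted vertices contribute at most `w v` to the sum in total, and deleting vertices
only lowers the degrees of the others, hence only increases their contributions.
-/

open Finset

section

variable {V : Type*} {G : SimpleGraph V}

lemma isIndepFinset_iff_isIndepSet {I : Finset V} :
    G.IsIndepFinset I ↔ G.IsIndepSet (I : Set V) :=
  ⟨fun h x hx y hy ↦ h x hx y hy, fun h _ hx _ hy ↦ h hx hy⟩

lemma isIndepFinset_insert_of_not_adj [DecidableEq V] {I : Finset V} {v : V}
    (hI : G.IsIndepFinset I) (hv : ∀ u ∈ I, ¬ G.Adj v u) : G.IsIndepFinset (insert v I) := by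
  rw [isIndepFinset_iff_isIndepSet] at hI ⊢
  rw [coe_insert]
  exact hI.insert fun u hu _ ↦ ⟨hv u hu, fun h ↦ hv u hu h.symm⟩

variable (G) [DecidableRel G.Adj]

/-- The number of neighbours of `v` in `S`. For `v ∈ S` this is the degree of `v` in the subgraph
induced on `S`; it makes sense even when `G` is not locally finite. -/
def degreeWithin (S : Finset V) (v : V) : ℕ := #{u ∈ S | G.Adj v u}

lemma degreeWithin_mono {S T : Finset V} (h : T ⊆ S) (v : V) :
    degreeWithin G T v ≤ degreeWithin G S v :=
  card_le_card (filter_subset_filter _ h)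

lemma degreeWithin_univ [Fintype V] (v : V) : degreeWithin G univ v = G.degree v := by
  rw [degreeWithin, ← G.neighborFinset_eq_filter, G.card_neighborFinset_eq_degree]

/-- The closed neighbourhood of `v` in `S`: the neighbours of `v` in `S`, together with `v` itself
(whether or not `v ∈ S`). It is what one greedy step deletes. -/
def closedNeighborsWithin [DecidableEq V] (S : Finset V) (v : V) : Finset V :=
  insert v {u ∈ S | G.Adj v u}

section ClosedNeighbors

variable [DecidableEq V] {S : Finset V} {u v : V}

lemma mem_closedNeighborsWithin :
    u ∈ closedNeighborsWithin G S v ↔ u = v ∨ u ∈ S ∧ G.Adj v u := by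
  simp [closedNeighborsWithin]

lemma self_mem_closedNeighborsWithin : v ∈ closedNeighborsWithin G S v :=
  mem_insert_self _ _

lemma closedNeighborsWithin_subset (hv : v ∈ S) : closedNeighborsWithin G S v ⊆ S :=
  insert_subset hv (filter_subset _ _)

lemma card_closedNeighborsWithin :
    #(closedNeighborsWithin G S v) = 1 + degreeWithin G S v := by
  rw [closedNeighborsWithin, card_insert_of_notMem (by simp), degreeWithin, add_comm]

lemma not_adj_of_mem_sdiff_closedNeighborsWithin (hu : u ∈ S \ closedNeighborsWithin G S v) :
    ¬ G.Adj v u := by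
  rw [mem_sdiff, mem_closedNeighborsWithin] at hu
  exact fun h ↦ hu.2 (.inr ⟨hu.1, h⟩)

end ClosedNeighbors

variable {𝕜 : Type*} [Field 𝕜] [LinearOrder 𝕜] [IsStrictOrderedRing 𝕜] {w : V → 𝕜}

lemma sum_div_one_add_degreeWithin_le_of_subset {S T : Finset V} (h : T ⊆ S)
    (hw : ∀ u ∈ T, 0 ≤ w u) :
    ∑ u ∈ T, w u / (1 + degreeWithin G S u) ≤ ∑ u ∈ T, w u / (1 + degreeWithin G T u) := by
  refine sum_le_sum fun u hu ↦ ?_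
  have := hw u hu
  have := degreeWithin_mono G h u
  gcongr

lemma sum_closedNeighborsWithin_div_le [DecidableEq V] {S : Finset V} {v : V}
    (hmax : ∀ u ∈ closedNeighborsWithin G S v,
      w u / (1 + degreeWithin G S u) ≤ w v / (1 + degreeWithin G S v)) :
    ∑ u ∈ closedNeighborsWithin G S v, w u / (1 + degreeWithin G S u) ≤ w v :=
  calc ∑ u ∈ closedNeighborsWithin G S v, w u / (1 + degreeWithin G S u)
      ≤ #(closedNeighborsWithin G S v) • (w v / (1 + degreeWithin G S v)) :=
        sum_le_card_nsmul _ _ _ hmax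
    _ = (1 + degreeWithin G S v) * (w v / (1 + degreeWithin G S v)) := by
        rw [card_closedNeighborsWithin, nsmul_eq_mul, Nat.cast_add, Nat.cast_one]
    _ = w v := mul_div_cancel₀ _ (by positivity)

theorem caro_wei_general (S : Finset V) (hw : ∀ v ∈ S, 0 ≤ w v) :
    ∃ I ⊆ S, G.IsIndepFinset I ∧
      ∑ v ∈ S, w v / (1 + degreeWithin G S v) ≤ ∑ v ∈ I, w v := by
  classical
  induction S using Finset.strongInduction with
  | H S ih =>
    obtain rfl | hS := S.eq_empty_or_nonempty
    · exact ⟨∅, Subset.rfl, by simp [SimpleGraph.IsIndepFinset], by simp⟩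
    obtain ⟨v, hv, hmax⟩ := S.exists_max_image (fun v ↦ w v / (1 + degreeWithin G S v)) hS
    set C := closedNeighborsWithin G S v
    have hCS : C ⊆ S := closedNeighborsWithin_subset G hv
    have hvC : v ∈ C := self_mem_closedNeighborsWithin G
    have hw_sdiff : ∀ u ∈ S \ C, 0 ≤ w u := fun u hu ↦ hw u (sdiff_subset hu)
    obtain ⟨I, hIS, hI, hsum⟩ := ih (S \ C) (sdiff_ssubset hCS ⟨v, hvC⟩) hw_sdiff
    have hvI : v ∉ I := fun h ↦ (mem_sdiff.1 (hIS h)).2 hvC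
    refine ⟨insert v I, insert_subset hv (hIS.trans sdiff_subset),
      isIndepFinset_insert_of_not_adj hI fun u hu ↦
        not_adj_of_mem_sdiff_closedNeighborsWithin G (hIS hu), ?_⟩
    calc ∑ u ∈ S, w u / (1 + degreeWithin G S u)
        = ∑ u ∈ C, w u / (1 + degreeWithin G S u)
          + ∑ u ∈ S \ C, w u / (1 + degreeWithin G S u) := by
          rw [add_comm, sum_sdiff hCS]
      _ ≤ w v + ∑ u ∈ S \ C, w u / (1 + degreeWithin G (S \ C) u) :=
          add_le_add (sum_closedNeighborsWithin_div_le G fun u hu ↦ hmax u (hCS hu))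
            (sum_div_one_add_degreeWithin_le_of_subset G sdiff_subset hw_sdiff)
      _ ≤ w v + ∑ u ∈ I, w u := by gcongr
      _ = ∑ u ∈ insert v I, w u := (sum_insert hvI).symm

end

/-- **Turán-type bound (Caro–Wei)**: every finite simple graph `G` contains an
independent set `I` with `|I| ≥ ∑_{v} 1/(1 + deg v)`. -/
theorem caro_wei {V : Type*} [Fintype V] [DecidableEq V] (G : SimpleGraph V)
    [DecidableRel G.Adj] :
    ∃ I : Finset V, G.IsIndepFinset I ∧
      (∑ v : V, (1 : ℝ) / (1 + G.degree v)) ≤ I.card := by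
  obtain ⟨I, -, hI, hsum⟩ := caro_wei_general G univ (w := fun _ ↦ (1 : ℝ)) (by simp)
  exact ⟨I, hI, by simpa [degreeWithin_univ] using hsum⟩
end

section
/- Let G be a finite simple graph with n vertices and m edges, where m ≥ n. Let N and ℓ be positive integers with N ≤ n²/(8m) and ℓ ≤ n/(2N). Then G contains ℓ pairwise disjoint independent sets, each of cardinality N. -/
/-!
The sets are chosen greedily. As long as fewer than `ℓ` of them have been chosen, the set `U` of
unused vertices has at least `n / 2 + N` elements. The graph induced on `U` has at most `m` edges,
so Turán's theorem for its complement gives an independent set of size at least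
`|U| ^ 2 / (2 * m + |U|)`, and this is at least `N` because
`2 * m * N ≤ (n / 2) ^ 2 ≤ |U| * (|U| - N)`.
-/

open Finset Function

section Turan

variable {V : Type*} [Fintype V] {G : SimpleGraph V} [DecidableRel G.Adj]

lemma two_mul_card_edgeFinset_le_of_cliqueFree {r : ℕ} (hG : G.CliqueFree (r + 1)) :
    2 * r * #G.edgeFinset ≤ (r - 1) * Fintype.card V ^ 2 := by
  have hle : #G.edgeFinset ≤ #(SimpleGraph.turanGraph (Fintype.card V) r).edgeFinset :=
    hG.card_edgeFinset_le.trans_eq SimpleGraph.card_edgeFinset_turanGraph.symm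
  grw [hle, SimpleGraph.mul_card_edgeFinset_turanGraph_le]

variable (G) in
lemma card_edgeFinset_add_card_edgeFinset_compl [DecidableEq V] :
    #G.edgeFinset + #Gᶜ.edgeFinset = (Fintype.card V).choose 2 := by
  rw [← card_union_of_disjoint (SimpleGraph.disjoint_edgeFinset.2 disjoint_compl_right),
    ← SimpleGraph.edgeFinset_sup, ← SimpleGraph.card_edgeFinset_top_eq_card_choose_two]
  congr!
  exact sup_compl_eq_top

lemma card_sq_le_of_indepSetFree {r : ℕ} (hG : G.IndepSetFree (r + 1)) :
    Fintype.card V ^ 2 ≤ r * (2 * #G.edgeFinset + Fintype.card V) := by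
  classical
  have hcompl : Gᶜ.CliqueFree (r + 1) := G.cliqueFree_compl.2 hG
  have hturan := two_mul_card_edgeFinset_le_of_cliqueFree hcompl
  have hedges : 2 * (#G.edgeFinset + #Gᶜ.edgeFinset) + Fintype.card V = Fintype.card V ^ 2 := by
    rw [card_edgeFinset_add_card_edgeFinset_compl, Nat.choose_two_right,
      Nat.mul_div_cancel' (Nat.even_mul_pred_self _).two_dvd, Nat.mul_sub_one,
      Nat.sub_add_cancel (Nat.le_mul_self _), sq]
  rcases r with _ | r
  · have : IsEmpty V := SimpleGraph.cliqueFree_one.1 hcompl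
    simp
  · rw [Nat.add_sub_cancel] at hturan
    linarith [congrArg ((r + 1) * ·) hedges]

lemma card_edgeFinset_induce_le {V : Type*} (G : SimpleGraph V) [Fintype G.edgeSet] (s : Set V)
    [Fintype (G.induce s).edgeSet] :
    #(G.induce s).edgeFinset ≤ #G.edgeFinset := by
  simpa only [SimpleGraph.edgeFinset_card] using
    Fintype.card_le_of_embedding (SimpleGraph.Embedding.induce s).mapEdgeSet

variable (G) in
lemma exists_isNIndepSet_subset {U : Finset V} {k : ℕ} (hU : U.Nonempty)
    (hk : k * (2 * #G.edgeFinset + #U) ≤ #U ^ 2) :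
    ∃ I ⊆ U, G.IsNIndepSet k I := by
  classical
  rcases k with _ | r
  · exact ⟨∅, empty_subset U, by simp [SimpleGraph.isNIndepSet_iff]⟩
  by_contra! hfree
  have hinduce : (G.induce (U : Set V)).IndepSetFree (r + 1) := fun I hI ↦ by
    refine hfree (I.map (Embedding.subtype _)) (map_subtype_subset I) ⟨?_, by simp [hI.card_eq]⟩
    simpa [SimpleGraph.isIndepSet_iff, Set.Pairwise] using hI.isIndepSet
  have hturan : #U ^ 2 ≤ r * (2 * #G.edgeFinset + #U) := by
    have h := card_sq_le_of_indepSetFree hinduce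
    grw [card_edgeFinset_induce_le] at h
    simpa using h
  rw [add_one_mul] at hk
  linarith [hU.card_pos]

end Turan

lemma exists_pairwise_disjoint_of_forall_exists_disjoint {α : Type*} {P : Finset α → Prop}
    {k ℓ : ℕ} (hcard : ∀ T, P T → #T ≤ k)
    (hexists : ∀ B : Finset α, #B + k ≤ ℓ * k → ∃ T, P T ∧ Disjoint T B) :
    ∃ S : Fin ℓ → Finset α, Pairwise (Disjoint on S) ∧ ∀ i, P (S i) := by
  classical
  induction ℓ with
  | zero => exact ⟨Fin.elim0, fun i ↦ i.elim0, fun i ↦ i.elim0⟩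
  | succ ℓ ih =>
    obtain ⟨S, hdisj, hS⟩ := ih fun B hB ↦ hexists B (by grw [hB]; gcongr; omega)
    have hused : #(univ.biUnion S) ≤ ℓ * k := by
      simpa using card_biUnion_le_card_mul univ S k fun i _ ↦ hcard _ (hS i)
    obtain ⟨T, hT, hTdisj⟩ := hexists (univ.biUnion S) (by grw [hused, Nat.succ_mul])
    rw [disjoint_biUnion_right] at hTdisj
    refine ⟨Fin.cons T S, ?_, Fin.cases hT hS⟩
    have : Std.Symm (Disjoint on (Fin.cons T S : Fin (ℓ + 1) → Finset α)) :=
      ⟨fun _ _ h ↦ h.symm⟩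
    exact pairwise_fin_succ_iff_of_isSymm.2 ⟨fun i ↦ hTdisj i (mem_univ i), hdisj⟩

lemma mul_two_mul_add_le_sq {n m N u : ℕ} (hN : N * (8 * m) ≤ n ^ 2) (hu : n + 2 * N ≤ 2 * u) :
    N * (2 * m + u) ≤ u ^ 2 := by
  obtain ⟨w, rfl⟩ : ∃ w, u = N + w := Nat.exists_eq_add_of_le (by omega)
  have hnw : n ^ 2 ≤ (2 * w) ^ 2 := by gcongr; omega
  have hmw : N * (2 * m) ≤ w ^ 2 := by linarith
  calc N * (2 * m + (N + w)) = N * (2 * m) + N * (N + w) := mul_add ..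
    _ ≤ w ^ 2 + N * (N + w) + N * w := by grw [hmw]; exact Nat.le_add_right ..
    _ = (N + w) ^ 2 := by ring

theorem repeated_turan_general {V : Type*} [Fintype V] (G : SimpleGraph V) [DecidableRel G.Adj]
    {N ℓ : ℕ} (hN : 0 < N) (hNle : N * (8 * #G.edgeFinset) ≤ Fintype.card V ^ 2)
    (hℓle : ℓ * (2 * N) ≤ Fintype.card V) :
    ∃ S : Fin ℓ → Finset V,
      (∀ i j, i ≠ j → Disjoint (S i) (S j)) ∧
      (∀ i, G.IsIndepFinset (S i)) ∧
      (∀ i, (S i).card = N) := by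
  classical
  obtain ⟨S, hdisj, hS⟩ : ∃ S : Fin ℓ → Finset V,
      Pairwise (Disjoint on S) ∧ ∀ i, G.IsNIndepSet N (S i) := by
    refine exists_pairwise_disjoint_of_forall_exists_disjoint (fun T hT ↦ hT.card_eq.le)
      fun B hB ↦ ?_
    have hunused : Fintype.card V + 2 * N ≤ 2 * #Bᶜ := by
      linarith [B.card_compl_add_card]
    obtain ⟨I, hIB, hI⟩ := exists_isNIndepSet_subset G (card_pos.1 (by omega))
      (mul_two_mul_add_le_sq hNle hunused)
    exact ⟨I, hI, subset_compl_iff_disjoint_right.1 hIB⟩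
  exact ⟨S, fun _ _ hij ↦ hdisj hij, fun i _ hx _ hy hxy ↦ (hS i).isIndepSet hx hy hxy,
    fun i ↦ (hS i).card_eq⟩

/-- **Repeated Turán's theorem**: a finite simple graph with `n` vertices and `m ≥ n`
edges contains `ℓ` pairwise disjoint independent sets, each of size `N`, whenever
`N ≤ n²/(8m)` and `ℓ ≤ n/(2N)`. -/
theorem repeated_turan {V : Type*} [Fintype V] [DecidableEq V] (G : SimpleGraph V)
    [DecidableRel G.Adj] (n m N ℓ : ℕ)
    (hn : n = Fintype.card V) (hm : m = G.edgeFinset.card) (hmn : n ≤ m)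
    (hN : 0 < N) (hℓ : 0 < ℓ)
    (hNle : (N : ℝ) ≤ (n : ℝ)^2 / (8 * m))
    (hℓle : (ℓ : ℝ) ≤ (n : ℝ) / (2 * N)) :
    ∃ S : Fin ℓ → Finset V,
      (∀ i j, i ≠ j → Disjoint (S i) (S j)) ∧
      (∀ i, G.IsIndepFinset (S i)) ∧
      (∀ i, (S i).card = N) := by
  subst hn hm
  exact repeated_turan_general G hN
    (by exact_mod_cast mul_le_of_le_div₀ (by positivity) (by positivity) hNle)
    (by exact_mod_cast mul_le_of_le_div₀ (by positivity) (by positivity) hℓle)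
end

section
/- Let U be a finite set with |U| = n ≥ 2 and let Q be a set of unordered pairs of distinct elements of U. Suppose that Q distinguishes every two distinct partitions of U into at most 3 blocks, i.e., for any two distinct partitions P₁, P₂ of U each with at most 3 blocks, there is a pair {u, v} ∈ Q such that u and v are in the same set of exactly one of P₁ and P₂. Then Q contains every unordered pair of distinct elements of U; in particular |Q| = n(n−1)/2. -/
section

variable {U : Type*} [Fintype U] [DecidableEq U]

/-- `P` is a partition of the finite type `U`: a finite collection of nonempty,
pairwise disjoint finsets covering `U`. -/
def IsPartitionOf (P : Finset (Finset U)) : Prop :=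
  (∀ b ∈ P, b.Nonempty) ∧ (∀ b ∈ P, ∀ b' ∈ P, b ≠ b' → Disjoint b b') ∧
    ∀ x : U, ∃ b ∈ P, x ∈ b

/-- `x` and `y` lie in the same set of the partition `P`. -/
def SameSet (P : Finset (Finset U)) (x y : U) : Prop := ∃ b ∈ P, x ∈ b ∧ y ∈ b

/-!
Color `x` and `y` alike and all other elements differently, then recolor `y` with a third color.
The fibers of the two colorings are partitions into at most three blocks, and `{x, y}` is the only
pair on which they disagree. Hence a distinguishing set of pairs must contain `{x, y}`.
-/

section Partition

open Finset

variable {V α : Type*} [DecidableEq V]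

lemma isPartitionOf_parts [Fintype V] (P : Finpartition (univ : Finset V)) :
    IsPartitionOf P.parts :=
  ⟨fun _ ↦ P.nonempty_of_mem_parts, fun _ hb _ hb' ↦ P.disjoint hb hb',
    fun x ↦ P.exists_mem (mem_univ x)⟩

lemma sameSet_parts_iff {s : Finset V} (P : Finpartition s) {u v : V} :
    SameSet P.parts u v ↔ u ∈ P.part v :=
  P.mem_part_iff_exists.symm

variable [Fintype V] [DecidableEq α]

/-- The partition of `V` into the nonempty fibers of a coloring `f`. Unused colors contribute
no block, so that `k` colors give a partition into at most `k` blocks. -/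
def fiberPartition (f : V → α) : Finpartition (univ : Finset V) :=
  have : DecidableRel (Setoid.ker f).r := fun u v ↦ inferInstanceAs (Decidable (f u = f v))
  Finpartition.ofSetoid (Setoid.ker f)

lemma sameSet_fiberPartition_iff (f : V → α) {u v : V} :
    SameSet (fiberPartition f).parts u v ↔ f u = f v := by
  rw [sameSet_parts_iff, fiberPartition, Finpartition.mem_part_ofSetoid_iff_rel, Setoid.ker_def,
    eq_comm]

lemma card_parts_fiberPartition_le [Fintype α] (f : V → α) :
    #(fiberPartition f).parts ≤ Fintype.card α := by
  have parts_subset : (fiberPartition f).parts ⊆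
      univ.image fun c ↦ ({v | c = f v} : Finset V) := by
    intro b hb
    obtain ⟨u, -, rfl⟩ := mem_image.1 hb
    exact mem_image_of_mem _ (mem_univ (f u))
  exact (card_le_card parts_subset).trans card_image_le

end Partition

section PairColoring

variable {V α : Type*} [DecidableEq V] {x y u v : V} {a b c : α}

/-- The coloring giving `x` color `a`, `y` color `b`, and every other element color `c`. It is used
with `a ≠ b` to separate `x` from `y`, and with `a = b` to merge them. -/
def pairColoring (x y : V) (a b c : α) (u : V) : α :=
  if u = x then a else if u = y then b else c

lemma pairColoring_eq_iff (hab : a ≠ b) (hac : a ≠ c) (hbc : b ≠ c) :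
    pairColoring x y a b c u = pairColoring x y a b c v ↔ (u = x ↔ v = x) ∧ (u = y ↔ v = y) := by
  grind [pairColoring]

lemma pairColoring_self_eq_iff (hac : a ≠ c) :
    pairColoring x y a a c u = pairColoring x y a a c v ↔
      (u = x ∨ u = y ↔ v = x ∨ v = y) := by
  grind [pairColoring]

lemma xor_pairColoring_eq_iff (hxy : x ≠ y) (hab : a ≠ b) (hac : a ≠ c) (hbc : b ≠ c) :
    Xor (pairColoring x y a a c u = pairColoring x y a a c v)
        (pairColoring x y a b c u = pairColoring x y a b c v) ↔
      s(u, v) = s(x, y) := by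
  rw [pairColoring_self_eq_iff hac, pairColoring_eq_iff hab hac hbc, Sym2.eq_iff]
  grind

end PairColoring

lemma exists_isPartitionOf_xor_sameSet_iff {V : Type*} [Finite V] {x y : V} (hxy : x ≠ y) :
    ∃ P₁ P₂ : Finset (Finset V), IsPartitionOf P₁ ∧ IsPartitionOf P₂ ∧ P₁.card ≤ 3 ∧ P₂.card ≤ 3 ∧
      ∀ u v, Xor (SameSet P₁ u v) (SameSet P₂ u v) ↔ s(u, v) = s(x, y) := by
  classical
  have := Fintype.ofFinite V
  let merged : V → Fin 3 := pairColoring x y 0 0 2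
  let separated : V → Fin 3 := pairColoring x y 0 1 2
  refine ⟨(fiberPartition merged).parts, (fiberPartition separated).parts, isPartitionOf_parts _,
    isPartitionOf_parts _, card_parts_fiberPartition_le _, card_parts_fiberPartition_le _,
    fun u v ↦ ?_⟩
  rw [sameSet_fiberPartition_iff, sameSet_fiberPartition_iff]
  exact xor_pairColoring_eq_iff hxy (by decide) (by decide) (by decide)

lemma card_eq_choose_two_of_forall_mem_iff_not_isDiag {V : Type*} [Fintype V]
    {Q : Finset (Sym2 V)} (hQ : ∀ e, e ∈ Q ↔ ¬ e.IsDiag) :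
    Q.card = (Fintype.card V).choose 2 := by
  classical
  rw [← Fintype.card_of_subtype Q hQ, Sym2.card_subtype_not_diag]

/-- If a set of unordered pairs `Q` distinguishes every two distinct partitions of `U`
into at most `3` blocks, then `Q` contains every unordered pair of distinct elements;
in particular `|Q| = n(n-1)/2`. -/
theorem nonadaptive_pair_lower_bound (n : ℕ) (hn : n = Fintype.card U) (hn2 : 2 ≤ n)
    (Q : Finset (Sym2 U)) (hQ : ∀ e ∈ Q, ¬ e.IsDiag)
    (hdist : ∀ P₁ P₂ : Finset (Finset U), IsPartitionOf P₁ → IsPartitionOf P₂ →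
      P₁.card ≤ 3 → P₂.card ≤ 3 → P₁ ≠ P₂ →
      ∃ u v : U, u ≠ v ∧ s(u, v) ∈ Q ∧ Xor' (SameSet P₁ u v) (SameSet P₂ u v)) :
    (∀ x y : U, x ≠ y → s(x, y) ∈ Q) ∧ Q.card = n * (n - 1) / 2 := by
  have mem_of_ne : ∀ x y : U, x ≠ y → s(x, y) ∈ Q := by
    intro x y hxy
    obtain ⟨P₁, P₂, hP₁, hP₂, hcard₁, hcard₂, hxor⟩ := exists_isPartitionOf_xor_sameSet_iff hxy
    have hne : P₁ ≠ P₂ := by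
      rintro rfl
      simpa using hxor x y
    obtain ⟨u, v, -, huvQ, huv⟩ := hdist P₁ P₂ hP₁ hP₂ hcard₁ hcard₂ hne
    rwa [← (hxor u v).1 huv]
  have mem_iff : ∀ e, e ∈ Q ↔ ¬ e.IsDiag := fun e ↦ ⟨hQ e, e.ind mem_of_ne⟩
  refine ⟨mem_of_ne, ?_⟩
  rw [card_eq_choose_two_of_forall_mem_iff_not_isDiag mem_iff, ← hn, Nat.choose_two_right]

end
end

section
/- Let U be a finite set, Q a set of unordered pairs of distinct elements of U, P a partition of U, and S ⊆ U such that for every pair {u, v} ∈ Q with {u, v} ∩ S ≠ ∅, the elements u and v are in different blocks of P. Let x, y ∈ S be distinct with {x, y} ∉ Q. Define P¹ to be the partition of U whose blocks are the nonempty sets X ∖ {x, y} for X ∈ P together with the block {x, y}, and define P² to be the partition whose blocks are the nonempty sets X ∖ {x, y} for X ∈ P together with the blocks {x} and {y}. Then P¹ and P² are partitions of U, each with at most |P| + 2 blocks, and for every pair {u, v} ∈ Q and each b ∈ {1, 2}: u and v are in the same set of P if and only if u and v are in the same set of P^b. -/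
section

variable {U : Type*} [Fintype U] [DecidableEq U]

/-!
A partition `P` can be changed inside a set `W` without affecting the rest: cut `W` out of every
block and put any partition `D` of `W` in its place. This separates a pair joined by `P` only if
the pair meets `W`, and it joins a pair separated by `P` only if a block of `D` contains the pair.
If `P` cuts every queried pair meeting `W = {x, y}`, and `{x, y}` itself is not queried, neither of
the two can happen to a queried pair. `P¹` and `P²` are the cases where `D` is the coarsest and the
finest partition of `{x, y}`.
-/

section Repartition

variable {α : Type*} [GeneralizedBooleanAlgebra α] [DecidableEq α] {a b : α}

/-- The partition of `a` which agrees with `D` on `b` and with the trace of `P` on `a \ b`: the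
common form of `P¹` and `P²`, for `b = {x, y}`. -/
def repartition (P : Finpartition a) (D : Finpartition b) (hba : b ≤ a) : Finpartition a where
  parts := D.parts ∪ (P.avoid b).parts
  supIndep := D.supIndep.union (P.avoid b).supIndep <| by
    simpa only [Finpartition.sup_parts] using disjoint_sdiff_self_right
  sup_parts := by
    rw [Finset.sup_union, D.sup_parts, (P.avoid b).sup_parts, sup_sdiff_cancel_right hba]
  bot_notMem := Finset.notMem_union.mpr ⟨D.bot_notMem, (P.avoid b).bot_notMem⟩

theorem card_avoid_parts_le (P : Finpartition a) (b : α) :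
    (P.avoid b).parts.card ≤ P.parts.card :=
  Finset.card_erase_le.trans Finset.card_image_le

theorem card_repartition_parts_le (P : Finpartition a) (D : Finpartition b) (hba : b ≤ a) :
    (repartition P D hba).parts.card ≤ P.parts.card + D.parts.card :=
  calc (repartition P D hba).parts.card
    _ ≤ D.parts.card + (P.avoid b).parts.card := Finset.card_union_le _ _
    _ ≤ D.parts.card + P.parts.card := Nat.add_le_add_left (card_avoid_parts_le P b) _
    _ = P.parts.card + D.parts.card := Nat.add_comm _ _

end Repartition

section SameSet

variable {α : Type*} [DecidableEq α] {s W : Finset α} {u v : α}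

theorem sameSet_union {P R : Finset (Finset α)} :
    SameSet (P ∪ R) u v ↔ SameSet P u v ∨ SameSet R u v := by
  simp only [SameSet, Finset.mem_union, or_and_right, exists_or]

theorem SameSet.mem_and_mem {P : Finpartition s} (h : SameSet P.parts u v) : u ∈ s ∧ v ∈ s :=
  let ⟨_, hb, hu, hv⟩ := h
  ⟨P.le hb hu, P.le hb hv⟩

theorem SameSet.mk_eq_of_ne {x y : α} {D : Finpartition {x, y}} (h : SameSet D.parts u v)
    (huv : u ≠ v) : s(x, y) = s(u, v) :=
  (Sym2.mem_and_mem_iff huv).mp <| by simpa using h.mem_and_mem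

theorem sameSet_avoid_parts_iff {P : Finpartition s} :
    SameSet (P.avoid W).parts u v ↔ SameSet P.parts u v ∧ u ∉ W ∧ v ∉ W := by
  constructor
  · rintro ⟨_, hb, hu, hv⟩
    obtain ⟨X, hX, -, rfl⟩ := P.mem_avoid.mp hb
    rw [Finset.mem_sdiff] at hu hv
    exact ⟨⟨X, hX, hu.1, hv.1⟩, hu.2, hv.2⟩
  · rintro ⟨⟨X, hX, hu, hv⟩, huW, hvW⟩
    exact ⟨X \ W, P.mem_avoid.mpr ⟨X, hX, fun hXW => huW (hXW hu), rfl⟩,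
      Finset.mem_sdiff.mpr ⟨hu, huW⟩, Finset.mem_sdiff.mpr ⟨hv, hvW⟩⟩

theorem sameSet_repartition_parts_iff {P : Finpartition s} {D : Finpartition W} (hW : W ⊆ s)
    (hD : ¬ SameSet D.parts u v) (hP : u ∈ W ∨ v ∈ W → ¬ SameSet P.parts u v) :
    SameSet (repartition P D hW).parts u v ↔ SameSet P.parts u v := by
  have notMem_of_sameSet (h : SameSet P.parts u v) : u ∉ W ∧ v ∉ W :=
    not_or.mp fun hmem => hP hmem h
  rw [repartition, sameSet_union, or_iff_right hD, sameSet_avoid_parts_iff,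
    and_iff_left_of_imp notMem_of_sameSet]

theorem repartition_parts_eq_union_filter (P : Finpartition s) (D : Finpartition W) (hW : W ⊆ s) :
    (repartition P D hW).parts =
      D.parts ∪ (P.parts.image (fun X => X \ W)).filter (fun b => b.Nonempty) := by
  simp only [repartition, Finpartition.avoid, Finpartition.ofErase_parts,
    Finset.nonempty_iff_ne_empty, Finset.filter_ne', Finset.bot_eq_empty]

end SameSet

theorem isPartitionOf_iff_exists_finpartition {α : Type*} [Fintype α] [DecidableEq α]
    {P : Finset (Finset α)} :
    IsPartitionOf P ↔ ∃ F : Finpartition (Finset.univ : Finset α), F.parts = P := by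
  constructor
  · rintro ⟨hne, hdisj, hcov⟩
    exact ⟨{
      parts := P
      supIndep := Finset.supIndep_iff_pairwiseDisjoint.mpr hdisj
      sup_parts := Finset.eq_univ_iff_forall.mpr fun z => Finset.mem_sup.mpr (hcov z)
      bot_notMem := fun h => Finset.not_nonempty_empty (hne ∅ h) }, rfl⟩
  · rintro ⟨F, rfl⟩
    exact ⟨fun _ => F.nonempty_of_mem_parts, F.disjoint, fun z => F.exists_mem (Finset.mem_univ z)⟩

/-- Splitting off an unqueried pair `{x,y} ⊆ S` of a partition `P` all of whose queried
pairs touching `S` are cut by `P`: both modifications `P¹` (making `{x,y}` a block) and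
`P²` (making `{x}` and `{y}` singleton blocks) are partitions with at most `|P| + 2`
blocks that are consistent with `P` on every queried pair. -/
theorem split_pair_consistent (Q : Finset (Sym2 U)) (hQ : ∀ e ∈ Q, ¬ e.IsDiag)
    (P : Finset (Finset U)) (hP : IsPartitionOf P) (S : Finset U)
    (hcut : ∀ u v : U, s(u, v) ∈ Q → (u ∈ S ∨ v ∈ S) → ¬ SameSet P u v)
    (x y : U) (hx : x ∈ S) (hy : y ∈ S) (hxy : x ≠ y) (hnq : s(x, y) ∉ Q)
    (P1 P2 : Finset (Finset U))
    (hP1 : P1 = insert ({x, y} : Finset U)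
      ((P.image (fun X => X \ ({x, y} : Finset U))).filter (fun b => b.Nonempty)))
    (hP2 : P2 = insert ({x} : Finset U) (insert ({y} : Finset U)
      ((P.image (fun X => X \ ({x, y} : Finset U))).filter (fun b => b.Nonempty)))) :
    IsPartitionOf P1 ∧ IsPartitionOf P2 ∧
    P1.card ≤ P.card + 2 ∧ P2.card ≤ P.card + 2 ∧
    (∀ u v : U, s(u, v) ∈ Q →
      ((SameSet P u v ↔ SameSet P1 u v) ∧ (SameSet P u v ↔ SameSet P2 u v))) := by
  obtain ⟨F, rfl⟩ := isPartitionOf_iff_exists_finpartition.mp hP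
  have hpair_subset : {x, y} ⊆ S := Finset.insert_subset hx (Finset.singleton_subset_iff.mpr hy)
  have repartition_consistent (D : Finpartition {x, y}) :
      let R := (repartition F D (Finset.subset_univ _)).parts
      IsPartitionOf R ∧ R.card ≤ F.parts.card + 2 ∧
        ∀ u v, s(u, v) ∈ Q → (SameSet F.parts u v ↔ SameSet R u v) := by
    refine ⟨isPartitionOf_iff_exists_finpartition.mpr ⟨_, rfl⟩, ?_, fun u v huv => ?_⟩
    · exact (card_repartition_parts_le F D _).trans
        (Nat.add_le_add_left (D.card_parts_le_card.trans Finset.card_le_two) _)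
    · exact (sameSet_repartition_parts_iff _
        (fun hD => hnq (hD.mk_eq_of_ne (hQ _ huv) ▸ huv))
        (fun hmem => hcut u v huv (hmem.imp (@hpair_subset u) (@hpair_subset v)))).symm
  have hP1_eq : P1 = (repartition F (.indiscrete (Finset.insert_ne_empty x {y}))
      (Finset.subset_univ _)).parts := by
    rw [hP1, repartition_parts_eq_union_filter, Finpartition.indiscrete_parts, Finset.insert_eq]
  have hP2_eq : P2 = (repartition F (⊥ : Finpartition {x, y}) (Finset.subset_univ _)).parts := by
    rw [hP2, repartition_parts_eq_union_filter, Finpartition.parts_bot]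
    simp [Finset.insert_union]
  obtain ⟨hpart1, hcard1, hsame1⟩ := hP1_eq ▸ repartition_consistent _
  obtain ⟨hpart2, hcard2, hsame2⟩ := hP2_eq ▸ repartition_consistent _
  exact ⟨hpart1, hpart2, hcard1, hcard2, fun u v huv => ⟨hsame1 u v huv, hsame2 u v huv⟩⟩

end
end

section
/- Let n ≥ 2 be an integer, let s be an even integer with 2 ≤ s ≤ n, and let U be a set with |U| = n. Then there exists a family F of subsets of U with |F| ≤ 5n²/s², each member of size at most s, such that every pair of distinct elements of U is contained in some member of F. -/
/-!
Put `t = ⌊s / 2⌋` and colour `U` with `k + 1 = ⌈n / t⌉` colours so that every colour is used at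
most `t` times. The unions of two colour classes have size at most `2 * t ≤ s` and cover every pair
of points. There are at most `k * (k + 1) / 2` of them, and `k * t < n` with `s ≤ 2 * t + 1` bounds
this by `5 * n ^ 2 / s ^ 2`.
-/

open Finset

section Colouring

variable {U κ : Type*} [Fintype U]

theorem exists_colouring_card_fiber_le {m t : ℕ} (h : Fintype.card U ≤ m * t) :
    ∃ c : U → Fin m, ∀ i, #{u | c u = i} ≤ t := by
  obtain ⟨f⟩ : Nonempty (U ↪ Fin m × Fin t) :=
    Function.Embedding.nonempty_of_card_le (by simpa using h)
  refine ⟨fun u ↦ (f u).1, fun i ↦ ?_⟩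
  have snd_injOn : Set.InjOn (fun u ↦ (f u).2) {u | (f u).1 = i} :=
    fun u hu v hv huv ↦ f.injective (Prod.ext (hu.trans hv.symm) huv)
  simpa using card_le_card_of_injOn (t := univ) (fun u ↦ (f u).2) (by simp)
    (by simpa using snd_injOn)

theorem card_filter_mem_le_mul [DecidableEq κ] {c : U → κ} {t : ℕ}
    (hc : ∀ i, #{u | c u = i} ≤ t) (p : Finset κ) : #{u | c u ∈ p} ≤ t * #p :=
  card_le_mul_card_image_of_maps_to (f := c) (by simp) t fun i _ ↦
    (card_le_card (filter_subset_filter _ (subset_univ _))).trans (hc i)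

variable [Fintype κ] [DecidableEq κ] [DecidableEq U]

/-- The unions of two colour classes of a colouring `c`, encoded as the preimages under `c` of the
two-element sets of colours; they form the query family. -/
def colourPairUnions (c : U → κ) : Finset (Finset U) :=
  (powersetCard 2 univ).image fun p ↦ univ.filter (c · ∈ p)

theorem card_colourPairUnions_le (c : U → κ) :
    #(colourPairUnions c) ≤ (Fintype.card κ).choose 2 :=
  card_image_le.trans_eq (by rw [card_powersetCard, card_univ])

theorem card_le_of_mem_colourPairUnions {c : U → κ} {t : ℕ} (hc : ∀ i, #{u | c u = i} ≤ t)
    {T : Finset U} (hT : T ∈ colourPairUnions c) : #T ≤ 2 * t := by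
  obtain ⟨p, hp, rfl⟩ := mem_image.1 hT
  calc #{u | c u ∈ p} ≤ t * #p := card_filter_mem_le_mul hc p
    _ = 2 * t := by rw [(mem_powersetCard.1 hp).2, mul_comm]

theorem exists_mem_colourPairUnions [Nontrivial κ] (c : U → κ) (x y : U) :
    ∃ T ∈ colourPairUnions c, x ∈ T ∧ y ∈ T := by
  obtain ⟨p, hxy, hp⟩ : ∃ p : Finset κ, {c x, c y} ⊆ p ∧ #p = 2 :=
    exists_superset_card_eq card_le_two Fintype.one_lt_card
  obtain ⟨hx, hy⟩ : c x ∈ p ∧ c y ∈ p := by simpa [insert_subset_iff] using hxy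
  exact ⟨_, mem_image_of_mem _ (mem_powersetCard.2 ⟨subset_univ p, hp⟩), by simpa, by simpa⟩

end Colouring

theorem mul_succ_mul_two_mul_add_one_sq_le (k : ℕ) {t : ℕ} (ht : 1 ≤ t) :
    k * (k + 1) * (2 * t + 1) ^ 2 ≤ 10 * (k * t + 1) ^ 2 := by
  obtain ⟨b, rfl⟩ := Nat.exists_eq_add_of_le' ht
  cases k with
  | zero => simp
  | succ a =>
    -- In terms of `a` and `b` the difference of the two sides has only nonnegative coefficients.
    ring_nf
    omega

theorem choose_two_le_five_mul_sq_div_sq {n s t k : ℕ} (hs : 0 < s) (ht : 1 ≤ t)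
    (hst : s ≤ 2 * t + 1) (hkn : k * t < n) :
    ((k + 1).choose 2 : ℝ) ≤ 5 * (n : ℝ) ^ 2 / (s : ℝ) ^ 2 := by
  have key : k * (k + 1) * s ^ 2 ≤ 10 * n ^ 2 :=
    calc k * (k + 1) * s ^ 2 ≤ k * (k + 1) * (2 * t + 1) ^ 2 := by gcongr
      _ ≤ 10 * (k * t + 1) ^ 2 := mul_succ_mul_two_mul_add_one_sq_le k ht
      _ ≤ 10 * n ^ 2 := by gcongr; exact hkn
  have key_real : (k : ℝ) * (k + 1) * s ^ 2 ≤ 10 * n ^ 2 := mod_cast key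
  rw [le_div_iff₀ (by positivity), Nat.cast_choose_two]
  push_cast
  linarith

theorem nonadaptive_strong_query_upper_bound_general {U : Type*} [Fintype U]
    (n s : ℕ) (hn : n = Fintype.card U) (hs2 : 2 ≤ s) (hsn : s ≤ n) :
    ∃ F : Finset (Finset U),
      ((F.card : ℝ) ≤ 5 * (n : ℝ) ^ 2 / (s : ℝ) ^ 2) ∧
      (∀ T ∈ F, T.card ≤ s) ∧
      (∀ x y : U, x ≠ y → ∃ T ∈ F, x ∈ T ∧ y ∈ T) := by
  classical
  obtain ⟨t, ht, hts, hst⟩ : ∃ t, 1 ≤ t ∧ 2 * t ≤ s ∧ s ≤ 2 * t + 1 :=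
    ⟨s / 2, by omega, by omega, by omega⟩
  obtain ⟨k, hkn, hnk⟩ : ∃ k, k * t < n ∧ n ≤ (k + 1) * t := by
    have := Nat.div_mul_le_self (n - 1) t
    have := Nat.lt_div_mul_add (a := n - 1) ht
    exact ⟨(n - 1) / t, by omega, by rw [Nat.succ_mul]; omega⟩
  have hk : k ≠ 0 := by rintro rfl; omega
  have : Nontrivial (Fin (k + 1)) := Fin.nontrivial_iff_two_le.2 (by omega)
  obtain ⟨c, hc⟩ := exists_colouring_card_fiber_le (hn ▸ hnk)
  refine ⟨colourPairUnions c, ?_, fun T hT ↦ (card_le_of_mem_colourPairUnions hc hT).trans hts,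
    fun x y _ ↦ exists_mem_colourPairUnions c x y⟩
  calc (#(colourPairUnions c) : ℝ) ≤ (k + 1).choose 2 :=
        mod_cast (card_colourPairUnions_le c).trans_eq (by rw [Fintype.card_fin])
    _ ≤ 5 * (n : ℝ) ^ 2 / (s : ℝ) ^ 2 :=
        choose_two_le_five_mul_sq_div_sq (by omega) ht hst hkn

/-- **Non-adaptive strong subset query upper bound**: for `n ≥ 2` and even `2 ≤ s ≤ n`,
there is a family of at most `5n²/s²` subsets of a set `U` of `n` elements, each of size
at most `s`, covering every pair of distinct elements of `U`. -/
theorem nonadaptive_strong_query_upper_bound {U : Type*} [Fintype U] [DecidableEq U]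
    (n s : ℕ) (hn : n = Fintype.card U) (hn2 : 2 ≤ n)
    (hs2 : 2 ≤ s) (hsn : s ≤ n) (hseven : Even s) :
    ∃ F : Finset (Finset U),
      ((F.card : ℝ) ≤ 5 * (n : ℝ) ^ 2 / (s : ℝ) ^ 2) ∧
      (∀ T ∈ F, T.card ≤ s) ∧
      (∀ x y : U, x ≠ y → ∃ T ∈ F, x ∈ T ∧ y ∈ T) :=
  nonadaptive_strong_query_upper_bound_general n s hn hs2 hsn
end

section
/- Let U be a set with |U| = n, let C be a partition of U, let K be the union of some subcollection of the blocks of C, and let c ≥ 1 be an integer such that every block of C not contained in K has size at most c. Let m ≥ 2 be an integer with c·m² ≤ n. If I is a uniformly random m-element subset of U, then the probability that there exist two distinct elements of I ∖ K lying in the same block of C is at most 1/2. -/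
/-!
This is a first-moment argument. Join two elements outside `K` by an edge when they share a block
of `C`; every vertex then has degree at most `c - 1`, so there are at most `n (c - 1) / 2` edges.
A fixed edge lies in a uniformly random `m`-set with probability `m (m - 1) / (n (n - 1))`, so the
expected number of edges inside the `m`-set is at most `(c - 1) m (m - 1) / (2 (n - 1)) ≤ 1 / 2`,
and this bounds the probability that there is one.
-/

section

variable {U : Type*} [Fintype U] [DecidableEq U]

open Finset

section Counting

theorem two_mul_choose_two (k : ℕ) : 2 * k.choose 2 = k * (k - 1) := by
  simpa only [Nat.choose_one_right, mul_comm] using Nat.choose_succ_right_eq k 1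

theorem pred_mul_mul_pred_lt_mul_sq {c m : ℕ} (hc : 0 < c) (hm : 0 < m) :
    (c - 1) * (m * (m - 1)) < c * m ^ 2 :=
  calc
    (c - 1) * (m * (m - 1)) ≤ (c - 1) * m ^ 2 := by
      rw [sq]
      gcongr
      exact Nat.sub_le m 1
    _ < c * m ^ 2 := Nat.mul_lt_mul_of_pos_right (Nat.sub_one_lt_of_lt hc) (pow_pos hm 2)

theorem card_filter_superset_mul_choose {α : Type*} [DecidableEq α] {s t : Finset α} (hst : s ⊆ t)
    (m : ℕ) : #{I ∈ t.powersetCard m | s ⊆ I} * (#t).choose #s =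
      (#t).choose m * m.choose #s := by
  rcases le_or_gt #s m with hsm | hms
  · rw [card_filter_powersetCard_subset s t m hst hsm, Nat.choose_mul hsm, mul_comm]
  · have no_superset : {I ∈ t.powersetCard m | s ⊆ I} = ∅ :=
      filter_eq_empty_iff.2 fun I hI hsI =>
        hms.not_ge ((card_le_card hsI).trans_eq (mem_powersetCard.1 hI).2)
    rw [no_superset, card_empty, zero_mul, Nat.choose_eq_zero_of_lt hms, mul_zero]

end Counting

section IndepSet

variable {α : Type*} {G : SimpleGraph α}

theorem not_isIndepSet_iff_exists_edge [DecidableEq α] {I : Finset α} :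
    ¬G.IsIndepSet I ↔ ∃ e ∈ G.edgeSet, e.toFinset ⊆ I := by
  simp only [Set.Pairwise, Sym2.exists, SimpleGraph.mem_edgeSet, Sym2.toFinset_mk_eq,
    insert_subset_iff, singleton_subset_iff, mem_coe]
  push Not
  exact ⟨fun ⟨x, hx, y, hy, _, hadj⟩ => ⟨x, y, hadj, hx, hy⟩,
    fun ⟨x, y, hadj, hx, hy⟩ => ⟨x, hx, y, hy, hadj.ne, hadj⟩⟩

variable [Fintype α] [DecidableRel G.Adj]

theorem two_mul_card_edgeFinset_le {d : ℕ} (hd : ∀ v, G.degree v ≤ d) :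
    2 * #G.edgeFinset ≤ Fintype.card α * d := by
  rw [← G.sum_degrees_eq_twice_card_edges]
  exact sum_le_card_nsmul univ _ d fun v _ => hd v

variable [DecidableEq α]

variable (G) in
/-- The `m`-element vertex sets that contain an edge of `G`, i.e. those that are not independent:
the outcomes whose number is to be bounded. -/
def dependentFinset (m : ℕ) : Finset (Finset α) :=
  {I | #I = m ∧ ¬G.IsIndepSet I}

theorem mem_dependentFinset {m : ℕ} {I : Finset α} :
    I ∈ dependentFinset G m ↔ #I = m ∧ ¬G.IsIndepSet I := by
  rw [dependentFinset, mem_filter_univ]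

variable (G) in
theorem card_dependentFinset_mul_choose_two_le (m : ℕ) :
    #(dependentFinset G m) * (Fintype.card α).choose 2 ≤
      #G.edgeFinset * ((Fintype.card α).choose m * m.choose 2) := by
  have union_bound : #(dependentFinset G m) ≤
      ∑ e ∈ G.edgeFinset, #{I ∈ powersetCard m univ | e.toFinset ⊆ I} := by
    refine (card_le_card fun I hI => ?_).trans card_biUnion_le
    obtain ⟨hIm, hI⟩ := mem_dependentFinset.1 hI
    obtain ⟨e, he, heI⟩ := not_isIndepSet_iff_exists_edge.1 hI
    exact mem_biUnion.2 ⟨e, SimpleGraph.mem_edgeFinset.2 he,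
      mem_filter.2 ⟨mem_powersetCard_univ.2 hIm, heI⟩⟩
  have card_supersets (e : Sym2 α) (he : e ∈ G.edgeFinset) :
      #{I ∈ powersetCard m univ | e.toFinset ⊆ I} * (Fintype.card α).choose 2 =
        (Fintype.card α).choose m * m.choose 2 := by
    simpa only [card_univ, e.card_toFinset_of_not_isDiag (G.not_isDiag_of_mem_edgeFinset he)]
      using card_filter_superset_mul_choose (subset_univ e.toFinset) m
  calc
    _ ≤ (∑ e ∈ G.edgeFinset, #{I ∈ powersetCard m univ | e.toFinset ⊆ I}) *
        (Fintype.card α).choose 2 := Nat.mul_le_mul_right _ union_bound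
    _ = #G.edgeFinset * ((Fintype.card α).choose m * m.choose 2) := by
      rw [sum_mul, sum_congr rfl card_supersets, sum_const, smul_eq_mul]

theorem two_mul_card_dependentFinset_le {d m : ℕ} (hd : ∀ v, G.degree v ≤ d)
    (hm : d * (m * (m - 1)) < Fintype.card α) :
    2 * #(dependentFinset G m) ≤ (Fintype.card α).choose m := by
  rcases subsingleton_or_nontrivial α with _ | _
  · have no_dependent : dependentFinset G m = ∅ := eq_empty_of_forall_notMem fun I hI =>
      (mem_dependentFinset.1 hI).2 (Set.subsingleton_of_subsingleton.pairwise _)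
    simp [no_dependent]
  set n := Fintype.card α
  set dependent := #(dependentFinset G m)
  have choose_two_pos : 0 < n.choose 2 := Nat.choose_pos Fintype.one_lt_card
  refine Nat.le_of_mul_le_mul_right ?_ (mul_pos two_pos choose_two_pos)
  calc
    2 * dependent * (2 * n.choose 2) = 4 * (dependent * n.choose 2) := by ring
    _ ≤ 4 * (#G.edgeFinset * (n.choose m * m.choose 2)) :=
      Nat.mul_le_mul_left _ (card_dependentFinset_mul_choose_two_le G m)
    _ = n.choose m * (2 * #G.edgeFinset * (2 * m.choose 2)) := by ring
    _ ≤ n.choose m * (n * d * (2 * m.choose 2)) :=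
      Nat.mul_le_mul_left _ (Nat.mul_le_mul_right _ (two_mul_card_edgeFinset_le hd))
    _ = n.choose m * (n * (d * (m * (m - 1)))) := by rw [two_mul_choose_two, mul_assoc n]
    _ ≤ n.choose m * (n * (n - 1)) :=
      Nat.mul_le_mul_left _ (Nat.mul_le_mul_left _ (Nat.le_sub_one_of_lt hm))
    _ = n.choose m * (2 * n.choose 2) := by rw [two_mul_choose_two]

end IndepSet

section ConflictGraph

variable {α : Type*} {C : Finset (Finset α)} {K : Finset α}

variable (C K) in
/-- The conflict graph of a family of blocks `C` with known part `K`: two distinct elements outside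
`K` are adjacent when some block contains both, so that the `m`-sets to be counted are exactly
those that are not independent. -/
def conflictGraph : SimpleGraph α where
  Adj x y := x ≠ y ∧ x ∉ K ∧ y ∉ K ∧ SameSet C x y
  symm := ⟨fun _ _ ⟨hne, hx, hy, B, hB, hxB, hyB⟩ => ⟨hne.symm, hy, hx, B, hB, hyB, hxB⟩⟩
  loopless := ⟨fun _ h => h.1 rfl⟩

theorem conflictGraph_not_isIndepSet_iff {I : Finset α} :
    ¬(conflictGraph C K).IsIndepSet I ↔
      ∃ x ∈ I, ∃ y ∈ I, x ≠ y ∧ x ∉ K ∧ y ∉ K ∧ SameSet C x y := by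
  simp [conflictGraph, Set.Pairwise]

theorem conflictGraph_degree_le [Fintype α] [DecidableRel (conflictGraph C K).Adj]
    (hC : (C : Set (Finset α)).PairwiseDisjoint id) {c : ℕ}
    (hsmall : ∀ B ∈ C, ¬B ⊆ K → #B ≤ c) (x : α) : (conflictGraph C K).degree x ≤ c - 1 := by
  classical
  rcases ((conflictGraph C K).neighborFinset x).eq_empty_or_nonempty with isolated | ⟨y, hy⟩
  · simp [← SimpleGraph.card_neighborFinset_eq_degree, isolated]
  obtain ⟨-, hxK, -, B, hB, hxB, -⟩ := (SimpleGraph.mem_neighborFinset _ _ _).1 hy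
  have neighbors_subset : (conflictGraph C K).neighborFinset x ⊆ B.erase x := by
    intro z hz
    obtain ⟨hne, -, -, B', hB', hxB', hzB'⟩ := (SimpleGraph.mem_neighborFinset _ _ _).1 hz
    obtain rfl : B' = B := hC.elim_finset hB' hB x hxB' hxB
    exact mem_erase.2 ⟨hne.symm, hzB'⟩
  calc
    (conflictGraph C K).degree x ≤ #(B.erase x) := card_le_card neighbors_subset
    _ = #B - 1 := card_erase_of_mem hxB
    _ ≤ c - 1 := Nat.sub_le_sub_right (hsmall B hB fun hBK => hxK (hBK hxB)) 1

end ConflictGraph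

theorem random_subset_independent_whp_general {α : Type*} [Fintype α] {C : Finset (Finset α)}
    (hC : (C : Set (Finset α)).PairwiseDisjoint id) (K : Finset α) {c m : ℕ}
    (hsmall : ∀ B ∈ C, ¬B ⊆ K → #B ≤ c) (hcm : (c - 1) * (m * (m - 1)) < Fintype.card α) :
    (Nat.card {I : Finset α // #I = m ∧
        ∃ x ∈ I, ∃ y ∈ I, x ≠ y ∧ x ∉ K ∧ y ∉ K ∧ SameSet C x y} : ℝ) ≤
      (1 / 2 : ℝ) * (Fintype.card α).choose m := by
  classical
  have dependent_le : (2 * #(dependentFinset (conflictGraph C K) m) : ℝ) ≤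
      (Fintype.card α).choose m := by
    exact_mod_cast two_mul_card_dependentFinset_le (conflictGraph_degree_le hC hsmall) hcm
  rw [Nat.subtype_card (dependentFinset (conflictGraph C K) m) fun I => by
    rw [mem_dependentFinset, conflictGraph_not_isIndepSet_iff]]
  linarith

/-- If every unknown block (block not contained in `K`) of the partition `C` has size at
most `c`, and `c·m² ≤ n`, then a uniformly random `m`-element subset `I` of `U` contains
two distinct elements of `I ∖ K` in the same block of `C` with probability at most `1/2`;
stated by counting: the number of bad `m`-element subsets is at most `(1/2)·C(n,m)`. -/
theorem random_subset_independent_whp (n : ℕ) (hn : n = Fintype.card U)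
    (C : Finset (Finset U)) (hC : IsPartitionOf C)
    (𝒦 : Finset (Finset U)) (h𝒦 : 𝒦 ⊆ C) (K : Finset U) (hK : K = 𝒦.biUnion id)
    (c : ℕ) (hc : 1 ≤ c) (hsmall : ∀ B ∈ C, ¬ B ⊆ K → B.card ≤ c)
    (m : ℕ) (hm : 2 ≤ m) (hcm : c * m ^ 2 ≤ n) :
    (Nat.card {I : Finset U // I.card = m ∧
        ∃ x ∈ I, ∃ y ∈ I, x ≠ y ∧ x ∉ K ∧ y ∉ K ∧ SameSet C x y} : ℝ) ≤
      (1 / 2 : ℝ) * (n.choose m) := by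
  subst hn
  exact random_subset_independent_whp_general (fun B hB B' hB' => hC.2.1 B hB B' hB') K hsmall
    ((pred_mul_mul_pred_lt_mul_sq hc (by lia)).trans_le hcm)

end
end

section
/- Let U be a finite set, let C be a partition of U, let K be the union of some subcollection of the blocks of C, and let W be a family of subsets of U with the following property: for every two elements x, y ∈ U ∖ K lying in different blocks of C, there exists I ∈ W such that x, y ∈ I and the elements of I ∖ K lie in pairwise different blocks of C. Let E be the set of unordered pairs {u, v} of distinct elements of U ∖ K for which there exists I ∈ W with u, v ∈ I and the elements of I ∖ K lying in pairwise different blocks of C. Then the connected components of the simple graph on vertex set U ∖ K whose edges are exactly the unordered pairs of distinct elements of U ∖ K not belonging to E are precisely the blocks of C not contained in K. -/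
/-!
Two distinct elements of the same block can never be witnessed, because a witness meets each block
at most once outside `K`; elements of different blocks always are, by hypothesis.  So the graph of
unwitnessed pairs joins exactly the distinct elements of a common block: it is a disjoint union of
cliques, one for each block left over outside `K`.
-/

section

variable {U : Type*} [Fintype U] [DecidableEq U]

section General

variable {α : Type*} {r : Setoid α} {K : Set α} {W : Set (Set α)} {x y : α}

theorem reachable_fromRel_setoid_iff : (SimpleGraph.fromRel r).Reachable x y ↔ r x y := by
  have fromRel_eq : SimpleGraph.fromRel r =
      SimpleGraph.fromEdgeSet (Sym2.fromRel (r := r) ⟨fun _ _ => r.symm⟩) := by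
    ext a b
    simp only [SimpleGraph.fromRel_adj, SimpleGraph.fromEdgeSet_adj, Sym2.fromRel_prop,
      r.comm' (x := b), or_self, ne_eq, and_comm]
  have : Std.Refl r := ⟨r.refl⟩
  have : IsTrans α r := ⟨fun _ _ _ => r.trans⟩
  rw [fromRel_eq, SimpleGraph.reachable_fromEdgeSet_fromRel_eq_reflTransGen,
    Relation.reflTransGen_eq_self]

theorem disjoint_sUnion_of_not_subset {C 𝒦 : Set (Set α)} (hC : C.PairwiseDisjoint id)
    (h𝒦 : 𝒦 ⊆ C) {B : Set α} (hB : B ∈ C) (hB𝒦 : ¬ B ⊆ ⋃₀ 𝒦) : Disjoint B (⋃₀ 𝒦) := by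
  refine Set.disjoint_sUnion_right.2 fun B' hB' => hC hB (h𝒦 hB') ?_
  rintro rfl
  exact hB𝒦 (Set.subset_sUnion_of_mem hB')

variable (r K W x y) in
/-- The pair `x`, `y` is witnessed by the family `W`: some `I ∈ W` contains both, and the elements
of `I` outside `K` lie in pairwise different classes of `r`.  The blocks of a partition are encoded
as the classes of an equivalence relation. -/
def IsWitnessed : Prop :=
  ∃ I ∈ W, x ∈ I ∧ y ∈ I ∧ (I \ K).Pairwise fun a b => ¬ r a b

theorem not_isWitnessed_of_rel (hx : x ∉ K) (hy : y ∉ K) (hxy : x ≠ y) (hr : r x y) :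
    ¬ IsWitnessed r K W x y :=
  fun ⟨_, _, hxI, hyI, hI⟩ => hI ⟨hxI, hx⟩ ⟨hyI, hy⟩ hxy hr

variable (r K W) in
/-- The graph on the complement of `K` whose edges are the pairs of distinct elements that are not
witnessed by `W`; its connected components recover the classes of `r` outside `K`. -/
def unwitnessedGraph : SimpleGraph {u : α // u ∉ K} :=
  SimpleGraph.fromRel fun p q => ¬ IsWitnessed r K W p q

theorem unwitnessedGraph_eq_fromRel
    (hW : ∀ x y, x ∉ K → y ∉ K → ¬ r x y → IsWitnessed r K W x y) :
    unwitnessedGraph r K W = SimpleGraph.fromRel (r.comap Subtype.val) := by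
  have not_isWitnessed_iff {p q : {u : α // u ∉ K}} (hpq : p ≠ q) :
      ¬ IsWitnessed r K W p q ↔ r.comap Subtype.val p q :=
    ⟨fun h => not_not.1 (mt (hW p q p.2 q.2) h),
      not_isWitnessed_of_rel p.2 q.2 (Subtype.coe_ne_coe.2 hpq)⟩
  ext p q
  simp only [unwitnessedGraph, SimpleGraph.fromRel_adj]
  exact and_congr_right fun hpq =>
    or_congr (not_isWitnessed_iff hpq) (not_isWitnessed_iff hpq.symm)

theorem reachable_unwitnessedGraph_iff
    (hW : ∀ x y, x ∉ K → y ∉ K → ¬ r x y → IsWitnessed r K W x y) (a b : {u : α // u ∉ K}) :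
    (unwitnessedGraph r K W).Reachable a b ↔ r a b := by
  rw [unwitnessedGraph_eq_fromRel hW, reachable_fromRel_setoid_iff, Setoid.comap_rel]

theorem learn_sparse_components_general {𝒦 : Set (Set α)} (h𝒦 : 𝒦 ⊆ r.classes) (hK : K = ⋃₀ 𝒦)
    (hW : ∀ x y, x ∉ K → y ∉ K → ¬ r x y → IsWitnessed r K W x y) :
    (∀ a b : {u : α // u ∉ K}, (unwitnessedGraph r K W).Reachable a b ↔ r a b) ∧
      ∀ B ∈ r.classes, ¬ B ⊆ K → ∀ x ∈ B, x ∉ K := by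
  refine ⟨reachable_unwitnessedGraph_iff hW, fun B hB hBK => ?_⟩
  subst hK
  have disjoint_K : Disjoint B (⋃₀ 𝒦) :=
    disjoint_sUnion_of_not_subset r.isPartition_classes.pairwiseDisjoint h𝒦 hB hBK
  exact fun _ hx => Set.disjoint_left.1 disjoint_K hx

end General

namespace IsPartitionOf

variable {α : Type*} {C : Finset (Finset α)} {x y : α}

theorem isPartition_image_coe (hC : IsPartitionOf C) :
    Setoid.IsPartition ((↑) '' (C : Set (Finset α)) : Set (Set α)) := by
  obtain ⟨nonempty, disjoint, cover⟩ := hC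
  refine Set.PairwiseDisjoint.isPartition_of_exists_of_ne_empty ?_ ?_ ?_
  · rintro _ ⟨b, hb, rfl⟩ _ ⟨b', hb', rfl⟩ hne
    exact Finset.disjoint_coe.2 (disjoint b hb b' hb' (ne_of_apply_ne _ hne))
  · simpa only [Set.exists_mem_image, Finset.mem_coe] using cover
  · rintro ⟨b, hb, hb_empty⟩
    exact (nonempty b hb).ne_empty (Finset.coe_eq_empty.1 hb_empty)

/-- The equivalence relation of lying in the same block of `C`, which lets the results on classes
of a setoid apply to a partition into finsets. -/
def setoid (hC : IsPartitionOf C) : Setoid α :=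
  Setoid.mkClasses _ hC.isPartition_image_coe.2

theorem classes_setoid (hC : IsPartitionOf C) :
    hC.setoid.classes = (↑) '' (C : Set (Finset α)) :=
  Setoid.classes_mkClasses _ hC.isPartition_image_coe

theorem setoid_rel_iff (hC : IsPartitionOf C) : hC.setoid x y ↔ SameSet C x y := by
  rw [Setoid.rel_iff_exists_classes, classes_setoid, Set.exists_mem_image]
  rfl

theorem isWitnessed_image_coe_iff (hC : IsPartitionOf C) {K : Finset α} {W : Finset (Finset α)} :
    IsWitnessed hC.setoid K ((↑) '' (W : Set (Finset α))) x y ↔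
      ∃ I ∈ W, x ∈ I ∧ y ∈ I ∧
        ∀ a ∈ I, ∀ b ∈ I, a ∉ K → b ∉ K → a ≠ b → ¬ SameSet C a b := by
  simp only [IsWitnessed, Set.exists_mem_image, Set.Pairwise, hC.setoid_rel_iff, Set.mem_sdiff,
    Finset.mem_coe, and_imp]
  grind

end IsPartitionOf

/-- **Correctness of `LearnSparse`.** Suppose every separated pair of `U ∖ K` (pair of
elements in different unknown blocks) is witnessed by some `I ∈ W` containing both whose
elements outside `K` lie in pairwise different blocks of `C`.  Form the graph on `U ∖ K`
whose edges are the pairs *not* so witnessed.  Then being connected in this graph is the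
same as lying in the same block of `C`; hence its connected components are precisely the
blocks of `C` not contained in `K` (each of which avoids `K` entirely). -/
theorem learn_sparse_components (C : Finset (Finset U)) (hC : IsPartitionOf C)
    (𝒦 : Finset (Finset U)) (h𝒦 : 𝒦 ⊆ C) (K : Finset U) (hK : K = 𝒦.biUnion id)
    (W : Finset (Finset U))
    (hW : ∀ x y : U, x ∉ K → y ∉ K → ¬ SameSet C x y →
      ∃ I ∈ W, x ∈ I ∧ y ∈ I ∧
        (∀ a ∈ I, ∀ b ∈ I, a ∉ K → b ∉ K → a ≠ b → ¬ SameSet C a b)) :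
    (∀ a b : {u : U // u ∉ K},
      (SimpleGraph.fromRel (fun p q : {u : U // u ∉ K} =>
          ¬ ∃ I ∈ W, (p : U) ∈ I ∧ (q : U) ∈ I ∧
            (∀ a ∈ I, ∀ b ∈ I, a ∉ K → b ∉ K → a ≠ b → ¬ SameSet C a b))).Reachable a b ↔
        SameSet C (a : U) (b : U)) ∧
    (∀ B ∈ C, ¬ B ⊆ K → ∀ x ∈ B, x ∉ K) := by
  have general := learn_sparse_components_general (r := hC.setoid) (K := K)
    (hC.classes_setoid ▸ Set.image_mono h𝒦) (by simp [hK, Set.sUnion_image])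
    fun x y hx hy hxy =>
      hC.isWitnessed_image_coe_iff.2 (hW x y hx hy (mt hC.setoid_rel_iff.2 hxy))
  simp only [unwitnessedGraph, hC.isWitnessed_image_coe_iff, hC.setoid_rel_iff,
    hC.classes_setoid, Set.forall_mem_image, Finset.coe_subset] at general
  exact general

end
end

section
/- Let U be a set with |U| = n, let δ ∈ (0, 1) satisfy ln(n/δ) ≥ 1, let B ≥ 1 be a real number, and let C ⊆ U with |C| ≤ 2n/B. Let X₁, …, X_m be i.i.d. uniform samples from U with m ≤ 4·B·ln(n/δ). Then the probability that |{i : Xᵢ ∈ C}| ≥ 72·ln(n/δ) is at most (δ/n)^{24}. -/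
/-!
This is the exponential moment method. Each sample contributes to the number of hits of `C` an
independent Bernoulli variable with parameter `|C| / |U|`, so the sum of `exp (t * hits)` over all
sample sequences factors as `(|U| + (exp t - 1) |C|) ^ m ≤ |U| ^ m * exp ((exp t - 1) m |C| / |U|)`,
and Markov's inequality bounds the number of sequences with many hits. With `L = log (n / δ)`, the
mean number of hits is at most `8 L`, so at `t = 1` and threshold `72 L` the exponent is
at most `(8 (e - 1) - 72) L ≤ -24 L`.
-/

section SampleCounting

open Finset

variable {ι U : Type*} [Fintype ι] [Fintype U] [DecidableEq U]

lemma sum_pow_card_filter_mem [DecidableEq ι] {R : Type*} [CommRing R] (C : Finset U) (x : R) :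
    ∑ f : ι → U, x ^ #{i | f i ∈ C} =
      (Fintype.card U + (x - 1) * #C) ^ Fintype.card ι := by
  have sum_weight : ∑ u, (if u ∈ C then x else 1) = Fintype.card U + (x - 1) * #C := by
    calc ∑ u, (if u ∈ C then x else 1)
        = ∑ u, (1 + if u ∈ C then x - 1 else 0) :=
          sum_congr rfl fun u _ => by split_ifs <;> ring
      _ = Fintype.card U + (x - 1) * #C := by
          simp only [sum_add_distrib, sum_ite_mem, univ_inter, sum_const, nsmul_eq_mul, card_univ,
            mul_one, mul_comm]
  calc ∑ f : ι → U, x ^ #{i | f i ∈ C}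
      = ∑ f : ι → U, ∏ i, (if f i ∈ C then x else 1) := by
        simp only [prod_ite, prod_const, one_pow, mul_one]
    _ = (∑ u, if u ∈ C then x else 1) ^ Fintype.card ι := by
        rw [← card_univ, ← prod_const, Fintype.prod_sum]
    _ = _ := by rw [sum_weight]

lemma card_le_card_filter_mem_mul_exp_le (C : Finset U) {t : ℝ} (ht : 0 ≤ t) (a : ℝ) :
    (Nat.card {f : ι → U // a ≤ (#{i | f i ∈ C} : ℝ)} : ℝ) * Real.exp (t * a) ≤
      (Fintype.card U + (Real.exp t - 1) * #C) ^ Fintype.card ι := by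
  classical
  rw [Nat.card_eq_fintype_card, Fintype.card_subtype, ← nsmul_eq_mul, ← sum_pow_card_filter_mem]
  calc (#{f : ι → U | a ≤ (#{i | f i ∈ C} : ℝ)}) • Real.exp (t * a)
      ≤ ∑ f : ι → U with a ≤ (#{i | f i ∈ C} : ℝ), Real.exp t ^ #{i | f i ∈ C} := by
        refine card_nsmul_le_sum _ _ _ fun f hf => ?_
        rw [← Real.exp_nat_mul, mul_comm _ t]
        gcongr
        exact (mem_filter.mp hf).2
    _ ≤ ∑ f : ι → U, Real.exp t ^ #{i | f i ∈ C} :=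
        sum_le_sum_of_subset_of_nonneg (filter_subset _ _) fun f _ _ => by positivity

lemma card_le_card_filter_mem_le_exp [Nonempty U] (C : Finset U) {t : ℝ} (ht : 0 ≤ t) (a : ℝ) :
    (Nat.card {f : ι → U // a ≤ (#{i | f i ∈ C} : ℝ)} : ℝ) ≤
      Real.exp ((Real.exp t - 1) * (Fintype.card ι * (#C / Fintype.card U)) - t * a) *
        (Fintype.card U : ℝ) ^ Fintype.card ι := by
  set n : ℝ := (Fintype.card U : ℝ)
  set m := Fintype.card ι
  have n_pos : 0 < n := Nat.cast_pos.mpr Fintype.card_pos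
  have exp_sub_one_nonneg : 0 ≤ Real.exp t - 1 := sub_nonneg.mpr (Real.one_le_exp ht)
  have weight_le : n + (Real.exp t - 1) * #C ≤ n * Real.exp ((Real.exp t - 1) * (#C / n)) := by
    calc n + (Real.exp t - 1) * #C = n * ((Real.exp t - 1) * (#C / n) + 1) := by
          field_simp
          ring
      _ ≤ _ := by gcongr; exact Real.add_one_le_exp _
  rw [Real.exp_sub, div_mul_eq_mul_div, le_div_iff₀ (Real.exp_pos _)]
  calc _ ≤ (n + (Real.exp t - 1) * #C) ^ m := card_le_card_filter_mem_mul_exp_le C ht a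
    _ ≤ (n * Real.exp ((Real.exp t - 1) * (#C / n))) ^ m := by gcongr
    _ = Real.exp ((Real.exp t - 1) * (m * (#C / n))) * n ^ m := by
        rw [mul_pow, ← Real.exp_nat_mul, mul_comm, mul_left_comm]

theorem concentration_samples_in_small_set_general [Nonempty U] {δ B : ℝ} (hδ : 0 < δ)
    (hB : 0 < B) {C : Finset U} (hC : (#C : ℝ) ≤ 2 * (Fintype.card U : ℝ) / B)
    (hι : (Fintype.card ι : ℝ) ≤ 4 * B * Real.log (Fintype.card U / δ)) :
    (Nat.card {f : ι → U //
        72 * Real.log (Fintype.card U / δ) ≤ (#{i | f i ∈ C} : ℝ)} : ℝ) ≤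
      (δ / Fintype.card U) ^ 24 * (Fintype.card U : ℝ) ^ Fintype.card ι := by
  have n_pos : (0 : ℝ) < Fintype.card U := Nat.cast_pos.mpr Fintype.card_pos
  have div_eq_exp : δ / Fintype.card U = Real.exp (-Real.log (Fintype.card U / δ)) := by
    rw [← Real.log_inv, inv_div, Real.exp_log (by positivity)]
  set L := Real.log (Fintype.card U / δ)
  have L_nonneg : 0 ≤ L :=
    nonneg_of_mul_nonneg_right ((Nat.cast_nonneg _).trans hι) (by positivity)
  have density_le : (#C : ℝ) / Fintype.card U ≤ 2 / B := by
    rwa [div_le_iff₀ n_pos, div_mul_eq_mul_div]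
  have mean_le : (Fintype.card ι : ℝ) * (#C / Fintype.card U) ≤ 8 * L := by
    calc _ ≤ 4 * B * L * (2 / B) := by gcongr
      _ = 8 * L := by
        field_simp
        ring
  have exponent_le :
      (Real.exp 1 - 1) * (Fintype.card ι * (#C / Fintype.card U)) - 1 * (72 * L) ≤ 24 * -L := by
    have : (Real.exp 1 - 1) * (Fintype.card ι * (#C / Fintype.card U)) ≤ 2 * (8 * L) := by
      gcongr
      linarith [Real.exp_one_lt_three]
    linarith
  refine (card_le_card_filter_mem_le_exp C zero_le_one _).trans ?_
  rw [div_eq_exp, ← Real.exp_nat_mul]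
  gcongr
  exact_mod_cast exponent_le

end SampleCounting

/-- If `|C| ≤ 2n/B` and `X₁, …, X_m` are i.i.d. uniform samples from `U` (modeled by a
uniformly random function `Fin m → U`) with `m ≤ 4·B·ln(n/δ)`, then the probability that
at least `72·ln(n/δ)` of the samples land in `C` is at most `(δ/n)²⁴`; stated by
counting: the number of such bad sample sequences is at most `(δ/n)²⁴ · n^m`. -/
theorem concentration_samples_in_small_set {U : Type*} [Fintype U] [DecidableEq U]
    (n : ℕ) (hn : n = Fintype.card U)
    (δ : ℝ) (hδ0 : 0 < δ) (hδ1 : δ < 1) (hlog : 1 ≤ Real.log ((n : ℝ) / δ))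
    (B : ℝ) (hB : 1 ≤ B)
    (C : Finset U) (hC : (C.card : ℝ) ≤ 2 * (n : ℝ) / B)
    (m : ℕ) (hm : (m : ℝ) ≤ 4 * B * Real.log ((n : ℝ) / δ)) :
    (Nat.card {f : Fin m → U //
        72 * Real.log ((n : ℝ) / δ) ≤
          ((Finset.univ.filter (fun i : Fin m => f i ∈ C)).card : ℝ)} : ℝ) ≤
      (δ / (n : ℝ)) ^ (24 : ℕ) * (n : ℝ) ^ m := by
  subst hn
  have : Nonempty U := not_isEmpty_iff.mp fun _ => by norm_num at hlog
  simpa only [Fintype.card_fin] using concentration_samples_in_small_set_general (ι := Fin m)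
    hδ0 (zero_lt_one.trans_le hB) hC (by rwa [Fintype.card_fin])
end
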